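/- Let f : ℝ → ℝ be of bounded variation on ℝ (finite total variation over ℝ), and let f(∞) = lim_{x→∞} f(x) and f(−∞) = lim_{x→−∞} f(x) (these limits exist). Define g(x) = f(x) − f(∞)H(x) − f(−∞)H(−x), where H is the Heaviside step function. Then g is of bounded variation on ℝ with lim_{|x|→∞} g(x) = 0, the improper integral ĝ(s) = lim_{X→−∞, Y→∞} ∫_X^Y e^{-ist} g(t) dt exists for each s ≠ 0, and for each x ∈ ℝ, (f(x−)+f(x+))/2 = (1/(2π)) · lim_{T→∞, S→0⁺} ∫_{S<|s|<T} e^{ixs} ĝ(s) ds + f(∞)H(x) + f(−∞)H(−x), where the double limit means: for every ε > 0 there exist M > 0 and η > 0 such that the stated quantity is within ε whenever T > M and 0 < S < η. -/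

import Mathlib

/-- The Heaviside step function: `1` for positive argument, `1/2` at `0`, `0` otherwise. -/
noncomputable def heaviside (x : ℝ) : ℝ :=
  if 0 < x then 1 else if x = 0 then 1/2 else 0

open MeasureTheory Filter Set Topology

/-- The sine integral `∫₀ᴬ sin t / t dt`. -/
noncomputable def sineIntegral (A : ℝ) : ℝ := ∫ t in (0 : ℝ)..A, Real.sinc t

lemma integral_exp_neg_mul_sin (A y : ℝ) :
    ∫ s in (0 : ℝ)..A, Real.exp (-s * y) * Real.sin s =
      (1 + y ^ 2)⁻¹ - Real.exp (-A * y) * (Real.cos A + y * Real.sin A) * (1 + y ^ 2)⁻¹ := by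
  have hy : (1 + y ^ 2) ≠ 0 := by positivity
  have hderiv (s : ℝ) : HasDerivAt
      (fun s => -(Real.exp (-s * y) * (Real.cos s + y * Real.sin s) * (1 + y ^ 2)⁻¹))
      (Real.exp (-s * y) * Real.sin s) s := by
    have h1 : HasDerivAt (fun s : ℝ => Real.exp (-s * y)) (Real.exp (-s * y) * (-1 * y)) s :=
      (((hasDerivAt_id s).neg).mul_const y).exp
    have h2 : HasDerivAt (fun s : ℝ => Real.cos s + y * Real.sin s)
        (-Real.sin s + y * Real.cos s) s :=
      (Real.hasDerivAt_cos s).add ((Real.hasDerivAt_sin s).const_mul y)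
    refine ((h1.mul h2).mul_const (1 + y ^ 2)⁻¹).neg.congr_deriv ?_
    field_simp
    ring
  rw [intervalIntegral.integral_eq_sub_of_hasDerivAt (fun s _ => hderiv s)
    ((by fun_prop : Continuous fun s : ℝ => Real.exp (-s * y) * Real.sin s).intervalIntegrable _ _)]
  simp
  ring

lemma integrable_exp_neg_mul_sin_prod (A : ℝ) :
    Integrable (Function.uncurry fun s y : ℝ => Real.exp (-s * y) * Real.sin s)
      ((volume.restrict (Ioc 0 A)).prod (volume.restrict (Ioi 0))) := by
  rw [integrable_prod_iff (by
    apply Continuous.aestronglyMeasurable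
    unfold Function.uncurry
    fun_prop)]
  constructor
  · refine (ae_restrict_iff' measurableSet_Ioc).2 (ae_of_all _ fun s hs => ?_)
    exact (integrableOn_exp_mul_Ioi (neg_lt_zero.2 hs.1) 0).mul_const (Real.sin s)
  · have h : ∀ s ∈ Ioc 0 A, |Real.sinc s| =
        ∫ y in Ioi (0 : ℝ), ‖Function.uncurry (fun s y : ℝ => Real.exp (-s * y) * Real.sin s) (s, y)‖ := by
      intro s hs
      simp only [Function.uncurry, norm_mul, Real.norm_eq_abs, Real.abs_exp]
      rw [integral_mul_const, integral_exp_mul_Ioi (neg_lt_zero.2 hs.1),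
        Real.sinc_of_ne_zero hs.1.ne', abs_div, abs_of_pos hs.1]
      simp
      ring
    refine IntegrableOn.congr_fun ?_ h measurableSet_Ioc
    exact ((Real.continuous_sinc.abs.integrableOn_Icc (a := 0) (b := A))).mono_set
      Ioc_subset_Icc_self

lemma abs_cos_add_mul_sin_mul_inv_le (A y : ℝ) :
    |(Real.cos A + y * Real.sin A) * (1 + y ^ 2)⁻¹| ≤ 1 := by
  have hy : 0 < 1 + y ^ 2 := by positivity
  rw [abs_mul, abs_of_pos (inv_pos.2 hy), ← div_eq_mul_inv, div_le_one hy]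
  refine abs_le_of_sq_le_sq ?_ hy.le
  nlinarith [Real.sin_sq_add_cos_sq A, sq_nonneg (y * Real.cos A - Real.sin A), sq_nonneg y,
    sq_nonneg (y ^ 2)]

lemma abs_sineIntegral_sub_le {A : ℝ} (hA : 0 < A) :
    |sineIntegral A - Real.pi / 2| ≤ A⁻¹ := by
  have h1 : sineIntegral A =
      ∫ s in Ioc 0 A, ∫ y in Ioi (0 : ℝ), Real.exp (-s * y) * Real.sin s := by
    rw [sineIntegral, intervalIntegral.integral_of_le hA.le]
    refine setIntegral_congr_fun measurableSet_Ioc fun s hs => ?_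
    rw [integral_mul_const, integral_exp_mul_Ioi (neg_lt_zero.2 hs.1),
      Real.sinc_of_ne_zero hs.1.ne']
    simp
    ring
  have hexp : IntegrableOn (fun y : ℝ => Real.exp (-A * y)) (Ioi 0) :=
    integrableOn_exp_mul_Ioi (neg_lt_zero.2 hA) 0
  have hbound (y : ℝ) :
      ‖Real.exp (-A * y) * (Real.cos A + y * Real.sin A) * (1 + y ^ 2)⁻¹‖ ≤
        Real.exp (-A * y) := by
    rw [mul_assoc, norm_mul, Real.norm_eq_abs, Real.norm_eq_abs, Real.abs_exp]
    exact mul_le_of_le_one_right (Real.exp_pos _).le (abs_cos_add_mul_sin_mul_inv_le A y)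
  have hint : IntegrableOn
      (fun y : ℝ => Real.exp (-A * y) * (Real.cos A + y * Real.sin A) * (1 + y ^ 2)⁻¹)
      (Ioi 0) :=
    Integrable.mono' hexp (by
      apply Measurable.aestronglyMeasurable
      fun_prop) (ae_of_all _ hbound)
  have h2 : sineIntegral A = Real.pi / 2 -
      ∫ y in Ioi (0 : ℝ),
        Real.exp (-A * y) * (Real.cos A + y * Real.sin A) * (1 + y ^ 2)⁻¹ := by
    rw [h1, integral_integral_swap (integrable_exp_neg_mul_sin_prod A)]
    simp_rw [← intervalIntegral.integral_of_le hA.le, integral_exp_neg_mul_sin]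
    rw [integral_sub integrable_inv_one_add_sq.integrableOn hint, integral_Ioi_inv_one_add_sq]
    simp
  rw [h2, sub_sub_cancel_left, abs_neg, ← Real.norm_eq_abs]
  refine (norm_integral_le_of_norm_le hexp (ae_of_all _ hbound)).trans_eq ?_
  rw [integral_exp_mul_Ioi (neg_lt_zero.2 hA)]
  simp

lemma sineIntegral_neg (A : ℝ) : sineIntegral (-A) = -sineIntegral A := by
  have h := intervalIntegral.integral_comp_neg (a := 0) (b := A) Real.sinc
  simp only [Real.sinc_neg, neg_zero] at h
  rw [sineIntegral, sineIntegral, h, intervalIntegral.integral_symm]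

lemma continuous_sineIntegral : Continuous sineIntegral :=
  intervalIntegral.continuous_primitive (fun _ _ => Real.continuous_sinc.intervalIntegrable _ _) 0

lemma abs_sineIntegral_le (A : ℝ) : |sineIntegral A| ≤ Real.pi / 2 + 1 := by
  wlog hA : 0 ≤ A generalizing A
  · simpa [sineIntegral_neg] using this (-A) (by linarith)
  rcases le_total A 1 with h | h
  · have := intervalIntegral.norm_integral_le_of_norm_le_const (a := 0) (b := A) (C := 1)
      (f := Real.sinc) fun x _ => Real.abs_sinc_le_one x
    rw [sub_zero, one_mul, abs_of_nonneg hA] at this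
    have hpi := Real.pi_pos
    exact this.trans (by linarith)
  · have h1 := abs_sineIntegral_sub_le (by linarith : 0 < A)
    have h2 : A⁻¹ ≤ 1 := inv_le_one_of_one_le₀ h
    have h3 := abs_sub_abs_le_abs_sub (sineIntegral A) (Real.pi / 2)
    rw [abs_of_pos (by positivity : 0 < Real.pi / 2)] at h3
    linarith

lemma tendsto_sineIntegral_atTop : Tendsto sineIntegral atTop (𝓝 (Real.pi / 2)) := by
  rw [tendsto_iff_norm_sub_tendsto_zero]
  refine squeeze_zero' (Eventually.of_forall fun _ => norm_nonneg _) ?_ tendsto_inv_atTop_zero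
  filter_upwards [eventually_gt_atTop 0] with A hA using abs_sineIntegral_sub_le hA

lemma tendsto_sineIntegral_mul_atTop (a : ℝ) :
    Tendsto (fun T => sineIntegral (T * a)) atTop (𝓝 (Real.pi / 2 * SignType.sign a)) := by
  rcases lt_trichotomy a 0 with ha | rfl | ha
  · have := (tendsto_sineIntegral_atTop.comp
      (tendsto_id.atTop_mul_const (neg_pos.2 ha))).neg
    simpa [ha, Function.comp_def, sineIntegral_neg] using this
  · simp [sineIntegral]
  · have := tendsto_sineIntegral_atTop.comp (tendsto_id.atTop_mul_const ha)
    simpa [ha, Function.comp_def] using this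

/-- The truncated Dirichlet integral `∫_S^T sin (a s) / s ds`. -/
lemma integral_sin_mul_div {S T : ℝ} (hS : 0 < S) (hT : 0 < T) (a : ℝ) :
    ∫ s in S..T, Real.sin (s * a) / s = sineIntegral (T * a) - sineIntegral (S * a) := by
  have h : ∀ s ∈ uIcc S T, Real.sin (s * a) / s = a * Real.sinc (s * a) := by
    intro s hs
    have hs0 : s ≠ 0 := ((lt_min hS hT).trans_le hs.1).ne'
    rcases eq_or_ne a 0 with rfl | ha
    · simp
    · rw [Real.sinc_of_ne_zero (mul_ne_zero hs0 ha)]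
      field_simp
  rw [intervalIntegral.integral_congr h, intervalIntegral.integral_const_mul,
    intervalIntegral.mul_integral_comp_mul_right, sineIntegral, sineIntegral,
    intervalIntegral.integral_interval_sub_left] <;>
  exact Real.continuous_sinc.intervalIntegrable _ _

lemma tendsto_sineIntegral_sub (a : ℝ) :
    Tendsto (fun P : ℝ × ℝ => sineIntegral (P.1 * a) - sineIntegral (P.2 * a))
      (atTop ×ˢ 𝓝[>] 0) (𝓝 (Real.pi / 2 * SignType.sign a)) := by
  have h0 : Tendsto (fun S => sineIntegral (S * a)) (𝓝[>] 0) (𝓝 0) := by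
    have : Tendsto (fun S => sineIntegral (S * a)) (𝓝 0) (𝓝 (sineIntegral (0 * a))) :=
      (continuous_sineIntegral.comp (continuous_mul_const a)).tendsto 0
    rw [zero_mul, sineIntegral, intervalIntegral.integral_same] at this
    exact this.mono_left nhdsWithin_le_nhds
  simpa using ((tendsto_sineIntegral_mul_atTop a).comp tendsto_fst).sub (h0.comp tendsto_snd)

/-- The left-continuous distribution function of `μ`, shifted by the total mass on the positive
half-line so that it vanishes at `±∞`. -/
noncomputable def centeredCDF (μ : Measure ℝ) (t : ℝ) : ℝ :=
  μ.real (Iio t) - (Ioi (0 : ℝ)).indicator (fun _ => μ.real univ) t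

/-- The improper Fourier transform of `centeredCDF μ`. -/
noncomputable def centeredTransform (μ : Measure ℝ) (s : ℝ) : ℂ :=
  (charFun μ (-s) - μ.real univ) / (Complex.I * s)

lemma measurable_centeredCDF (μ : Measure ℝ) [IsFiniteMeasure μ] :
    Measurable (centeredCDF μ) := by
  have h : Monotone fun t : ℝ => μ.real (Iio t) :=
    fun a b hab => measureReal_mono (Iio_subset_Iio hab)
  exact h.measurable.sub (measurable_const.indicator measurableSet_Ioi)

lemma norm_exp_neg_I_mul (s t : ℝ) : ‖Complex.exp (-(Complex.I * s * t))‖ = 1 := by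
  rw [show -(Complex.I * s * t) = ((-(s * t) : ℝ) : ℂ) * Complex.I by push_cast; ring,
    Complex.norm_exp_ofReal_mul_I]

lemma abs_centeredCDF_le (μ : Measure ℝ) [IsFiniteMeasure μ] (t : ℝ) :
    |centeredCDF μ t| ≤ μ.real univ := by
  have h1 : μ.real (Iio t) ≤ μ.real univ := measureReal_mono (subset_univ _)
  have h2 : 0 ≤ μ.real (Iio t) := measureReal_nonneg
  rw [centeredCDF, abs_le]
  by_cases ht : t ∈ Ioi (0 : ℝ)
  · rw [indicator_of_mem ht]
    constructor <;> linarith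
  · rw [indicator_of_notMem ht]
    constructor <;> linarith

lemma intervalIntegrable_exp_mul_centeredCDF (μ : Measure ℝ) [IsFiniteMeasure μ] (s X Y : ℝ) :
    IntervalIntegrable (fun t : ℝ => Complex.exp (-(Complex.I * s * t)) * (centeredCDF μ t : ℂ))
      volume X Y := by
  refine (intervalIntegrable_const (c := μ.real univ)).mono_fun' ?_ (ae_of_all _ fun t => ?_)
  · have := measurable_centeredCDF μ
    exact Measurable.aestronglyMeasurable (by fun_prop)
  · beta_reduce
    rw [norm_mul, norm_exp_neg_I_mul, one_mul, Complex.norm_real]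
    exact abs_centeredCDF_le μ t

/-- Integral of an oscillating exponential over the part of `(X, Y]` to the right of `u`. -/
lemma integral_exp_indicator_Ioi {s X Y : ℝ} (hs : s ≠ 0) (hXY : X ≤ Y) (u : ℝ) :
    ∫ t in X..Y, Complex.exp (-(Complex.I * s * t)) * (Ioi u).indicator 1 t =
      (Complex.exp (-(Complex.I * s * (min (max X u) Y : ℝ))) -
        Complex.exp (-(Complex.I * s * Y))) / (Complex.I * s) := by
  have hc : -(Complex.I * s) ≠ 0 := by simp [hs]
  have hfun : (fun t : ℝ => Complex.exp (-(Complex.I * s * t)) * (Ioi u).indicator 1 t) =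
      (Ioi u).indicator fun t : ℝ => Complex.exp (-(Complex.I * s) * t) := by
    ext t
    by_cases ht : t ∈ Ioi u <;> simp [ht]
  rw [hfun, intervalIntegral.integral_of_le hXY, setIntegral_indicator measurableSet_Ioi,
    Ioc_inter_Ioi]
  rcases le_total (max X u) Y with h | h
  · rw [min_eq_left h, ← intervalIntegral.integral_of_le h, integral_exp_mul_complex hc]
    have : (s : ℂ) ≠ 0 := by exact_mod_cast hs
    field_simp
    ring
  · rw [min_eq_right h, Ioc_eq_empty h.not_gt]
    simp

lemma centeredCDF_eq_integral (μ : Measure ℝ) [IsFiniteMeasure μ] (t : ℝ) :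
    (centeredCDF μ t : ℂ) =
      ∫ u, ((Ioi u).indicator (1 : ℝ → ℂ) t - (Ioi (0 : ℝ)).indicator 1 t) ∂μ := by
  have h : (fun u : ℝ => (Ioi u).indicator (1 : ℝ → ℂ) t) =
      fun u => (Iio t).indicator (fun _ => 1) u := by
    ext u
    simp [indicator]
  rw [integral_sub, h, integral_indicator_const _ measurableSet_Iio, integral_const, centeredCDF]
  · by_cases ht : 0 < t <;> simp [ht]
  · rw [h]
    exact (integrable_const (1 : ℂ)).indicator measurableSet_Iio
  · exact integrable_const _

lemma integrable_exp_mul_indicator_prod (μ : Measure ℝ) [IsFiniteMeasure μ] (s X Y : ℝ) :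
    Integrable (Function.uncurry fun t u : ℝ => Complex.exp (-(Complex.I * s * t)) *
      ((Ioi u).indicator (1 : ℝ → ℂ) t - (Ioi (0 : ℝ)).indicator 1 t))
      ((volume.restrict (Ioc X Y)).prod μ) := by
  refine Integrable.of_bound (C := 2) ?_ (ae_of_all _ ?_)
  · have h1 : Measurable fun P : ℝ × ℝ => (Ioi P.2).indicator (1 : ℝ → ℂ) P.1 := by
      have : (fun P : ℝ × ℝ => (Ioi P.2).indicator (1 : ℝ → ℂ) P.1) =
          {P : ℝ × ℝ | P.2 < P.1}.indicator 1 := by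
        ext P
        simp [indicator]
      rw [this]
      exact measurable_one.indicator (measurableSet_lt measurable_snd measurable_fst)
    have h2 : Measurable fun P : ℝ × ℝ => (Ioi (0 : ℝ)).indicator (1 : ℝ → ℂ) P.1 :=
      (measurable_one.indicator measurableSet_Ioi).comp measurable_fst
    unfold Function.uncurry
    exact Measurable.aestronglyMeasurable (by fun_prop)
  · rintro ⟨t, u⟩
    simp only [Function.uncurry, norm_mul, norm_exp_neg_I_mul, one_mul]
    refine (norm_sub_le _ _).trans ?_
    have h (v : ℝ) : ‖(Ioi v).indicator (1 : ℝ → ℂ) t‖ ≤ 1 := by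
      by_cases ht : t ∈ Ioi v <;> simp [ht]
    linarith [h u, h 0]

lemma integral_exp_mul_centeredCDF (μ : Measure ℝ) [IsFiniteMeasure μ] {s X Y : ℝ} (hs : s ≠ 0)
    (hXY : X ≤ Y) :
    ∫ t in X..Y, Complex.exp (-(Complex.I * s * t)) * (centeredCDF μ t : ℂ) =
      ∫ u, (Complex.exp (-(Complex.I * s * (min (max X u) Y : ℝ))) -
        Complex.exp (-(Complex.I * s * (min (max X 0) Y : ℝ)))) / (Complex.I * s) ∂μ := by
  simp_rw [centeredCDF_eq_integral, ← integral_const_mul]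
  rw [intervalIntegral.integral_of_le hXY,
    integral_integral_swap (integrable_exp_mul_indicator_prod μ s X Y)]
  congr 1 with u
  rw [← intervalIntegral.integral_of_le hXY]
  have hint (v : ℝ) : IntervalIntegrable
      (fun t : ℝ => Complex.exp (-(Complex.I * s * t)) * (Ioi v).indicator 1 t) volume X Y := by
    refine (intervalIntegrable_const (c := (1 : ℝ))).mono_fun' ?_ (ae_of_all _ fun t => ?_)
    · have : Measurable ((Ioi v).indicator (1 : ℝ → ℂ)) :=
        measurable_one.indicator measurableSet_Ioi
      exact Measurable.aestronglyMeasurable (by fun_prop)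
    · beta_reduce
      rw [norm_mul, norm_exp_neg_I_mul, one_mul]
      by_cases ht : t ∈ Ioi v <;> simp [ht]
  simp_rw [mul_sub]
  rw [intervalIntegral.integral_sub (hint u) (hint 0), integral_exp_indicator_Ioi hs hXY,
    integral_exp_indicator_Ioi hs hXY]
  ring

lemma integrable_exp_neg_I_mul (μ : Measure ℝ) [IsFiniteMeasure μ] (s : ℝ) :
    Integrable (fun u : ℝ => Complex.exp (-(Complex.I * s * u))) μ :=
  Integrable.of_bound (C := 1) (Continuous.aestronglyMeasurable (by fun_prop))
    (ae_of_all _ fun u => (norm_exp_neg_I_mul s u).le)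

lemma centeredTransform_eq_integral (μ : Measure ℝ) [IsFiniteMeasure μ] (s : ℝ) :
    centeredTransform μ s =
      ∫ u, (Complex.exp (-(Complex.I * s * u)) - 1) / (Complex.I * s) ∂μ := by
  rw [integral_div, integral_sub (integrable_exp_neg_I_mul μ s) (integrable_const _),
    centeredTransform, charFun_apply_real, integral_const]
  congr 2
  · congr 1 with u
    congr 1
    push_cast
    ring
  · simp

lemma tendsto_integral_exp_mul_centeredCDF (μ : Measure ℝ) [IsFiniteMeasure μ] {s : ℝ}
    (hs : s ≠ 0) :
    Tendsto (fun P : ℝ × ℝ =>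
        ∫ t in P.1..P.2, Complex.exp (-(Complex.I * s * t)) * (centeredCDF μ t : ℂ))
      (atBot ×ˢ atTop) (𝓝 (centeredTransform μ s)) := by
  have hev : ∀ v : ℝ, ∀ᶠ P : ℝ × ℝ in atBot ×ˢ atTop, P.1 ≤ v ∧ v ≤ P.2 := fun v =>
    (eventually_le_atBot v).prod_mk (eventually_ge_atTop v)
  rw [centeredTransform_eq_integral]
  refine Tendsto.congr' (f₁ := fun P : ℝ × ℝ =>
    ∫ u, (Complex.exp (-(Complex.I * s * (min (max P.1 u) P.2 : ℝ))) -
        Complex.exp (-(Complex.I * s * (min (max P.1 0) P.2 : ℝ)))) / (Complex.I * s) ∂μ) ?_ ?_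
  · filter_upwards [hev 0] with P hP
    exact (integral_exp_mul_centeredCDF μ hs (hP.1.trans hP.2)).symm
  · refine tendsto_integral_filter_of_dominated_convergence (fun _ => 2 / |s|)
      (Eventually.of_forall fun P => ?_) (Eventually.of_forall fun P => ae_of_all _ fun u => ?_)
      (integrable_const _) (ae_of_all _ fun u => ?_)
    · exact Continuous.aestronglyMeasurable (by fun_prop)
    · rw [norm_div, norm_mul, Complex.norm_I, one_mul, Complex.norm_real, Real.norm_eq_abs]
      gcongr
      refine (norm_sub_le _ _).trans_eq ?_
      rw [norm_exp_neg_I_mul, norm_exp_neg_I_mul]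
      norm_num
    · refine tendsto_const_nhds.congr' ?_
      filter_upwards [hev 0, hev u] with P h0 hu
      simp [max_eq_right h0.1, max_eq_right hu.1, min_eq_left h0.2, min_eq_left hu.2]

lemma continuousOn_centeredTransform (μ : Measure ℝ) [IsFiniteMeasure μ] :
    ContinuousOn (centeredTransform μ) {0}ᶜ := by
  unfold centeredTransform
  refine ContinuousOn.div ?_ (by fun_prop) fun s hs => ?_
  · exact ((continuous_charFun.comp continuous_neg).sub continuous_const).continuousOn
  · simpa using hs

lemma intervalIntegrable_exp_mul_centeredTransform (μ : Measure ℝ) [IsFiniteMeasure μ] (x : ℝ)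
    {a b : ℝ} (hab : 0 < a * b) :
    IntervalIntegrable (fun s : ℝ => Complex.exp (Complex.I * x * s) * centeredTransform μ s)
      volume a b := by
  refine ContinuousOn.intervalIntegrable (ContinuousOn.mul (by fun_prop)
    ((continuousOn_centeredTransform μ).mono fun s hs h => ?_))
  rw [mem_singleton_iff] at h
  subst h
  rcases mem_uIcc.1 hs with h | h <;> nlinarith [h.1, h.2]

lemma exp_mul_centeredTransform_add_neg (μ : Measure ℝ) [IsFiniteMeasure μ] (x : ℝ) {s : ℝ}
    (hs : s ≠ 0) :
    Complex.exp (Complex.I * x * s) * centeredTransform μ s +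
        Complex.exp (Complex.I * x * (-s : ℝ)) * centeredTransform μ (-s) =
      ((∫ u, 2 * (Real.sin (s * (x - u)) / s - Real.sin (s * x) / s) ∂μ : ℝ) : ℂ) := by
  have hs' : (s : ℂ) ≠ 0 := by exact_mod_cast hs
  have hint (r : ℝ) : Integrable
      (fun u : ℝ => (Complex.exp (-(Complex.I * r * u)) - 1) / (Complex.I * r)) μ :=
    ((integrable_exp_neg_I_mul μ r).sub (integrable_const _)).div_const _
  rw [centeredTransform_eq_integral, centeredTransform_eq_integral, ← integral_const_mul,
    ← integral_const_mul, ← integral_add ((hint s).const_mul _) ((hint (-s)).const_mul _),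
    ← integral_complex_ofReal]
  congr 1 with u
  push_cast
  simp only [Complex.sin]
  rw [show -((s : ℂ) * (x - u)) * Complex.I =
      Complex.I * x * (-s) + -(Complex.I * (-s) * u) by ring,
    show (s : ℂ) * (x - u) * Complex.I = Complex.I * x * s + -(Complex.I * s * u) by ring,
    show -((s : ℂ) * x) * Complex.I = Complex.I * x * (-s) by ring,
    show (s : ℂ) * x * Complex.I = Complex.I * x * s by ring, Complex.exp_add, Complex.exp_add]
  field_simp
  rw [Complex.I_sq]
  ring

lemma abs_sin_div_sub_le {S s : ℝ} (hS : 0 < S) (hs : S ≤ s) (y z : ℝ) :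
    ‖2 * (Real.sin y / s - Real.sin z / s)‖ ≤ 4 / S := by
  have h0 : 0 < s := hS.trans_le hs
  rw [← sub_div, Real.norm_eq_abs, abs_mul, abs_div, abs_two, abs_of_pos h0, ← mul_div_assoc]
  have h : |Real.sin y - Real.sin z| ≤ 2 := by
    refine (abs_sub _ _).trans ?_
    linarith [Real.abs_sin_le_one y, Real.abs_sin_le_one z]
  exact div_le_div₀ (by norm_num) (by linarith) hS hs

lemma integral_exp_mul_centeredTransform (μ : Measure ℝ) [IsFiniteMeasure μ] (x : ℝ) {S T : ℝ}
    (hS : 0 < S) (hST : S ≤ T) :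
    (∫ s in (-T)..(-S), Complex.exp (Complex.I * x * s) * centeredTransform μ s) +
        ∫ s in S..T, Complex.exp (Complex.I * x * s) * centeredTransform μ s =
      ((∫ u, 2 * ((sineIntegral (T * (x - u)) - sineIntegral (S * (x - u))) -
        (sineIntegral (T * x) - sineIntegral (S * x))) ∂μ : ℝ) : ℂ) := by
  have hT : 0 < T := hS.trans_le hST
  have hneg : IntervalIntegrable (fun s : ℝ => Complex.exp (Complex.I * x * (-s : ℝ)) *
      centeredTransform μ (-s)) volume S T := by
    have h := (IntervalIntegrable.iff_comp_neg).1
      (intervalIntegrable_exp_mul_centeredTransform μ x (a := -S) (b := -T) (by nlinarith))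
    simpa only [neg_neg] using h
  rw [← intervalIntegral.integral_comp_neg, add_comm, ← intervalIntegral.integral_add
    (intervalIntegrable_exp_mul_centeredTransform μ x (by positivity)) hneg]
  have hcongr : ∀ s ∈ uIcc S T, Complex.exp (Complex.I * x * s) * centeredTransform μ s +
        Complex.exp (Complex.I * x * (-s : ℝ)) * centeredTransform μ (-s) =
      ((∫ u, 2 * (Real.sin (s * (x - u)) / s - Real.sin (s * x) / s) ∂μ : ℝ) : ℂ) := by
    intro s hs
    exact exp_mul_centeredTransform_add_neg μ x ((lt_min hS hT).trans_le hs.1).ne'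
  have hprod : Integrable (Function.uncurry fun s u : ℝ =>
      2 * (Real.sin (s * (x - u)) / s - Real.sin (s * x) / s))
      ((volume.restrict (Ioc S T)).prod μ) := by
    refine Integrable.of_bound (C := 4 / S) ?_ ?_
    · unfold Function.uncurry
      exact Measurable.aestronglyMeasurable (by fun_prop)
    · have hmem : ∀ᵐ P ∂((volume.restrict (Ioc S T)).prod μ), P.1 ∈ Ioc S T :=
        Measure.quasiMeasurePreserving_fst.ae (ae_restrict_mem measurableSet_Ioc)
      filter_upwards [hmem] with P hP
      exact abs_sin_div_sub_le hS hP.1.le _ _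
  rw [intervalIntegral.integral_congr hcongr, intervalIntegral.integral_ofReal,
    intervalIntegral.integral_of_le hST, integral_integral_swap hprod]
  congr 2 with u
  have hint (a : ℝ) : IntervalIntegrable (fun s => Real.sin (s * a) / s) volume S T := by
    refine ContinuousOn.intervalIntegrable (ContinuousOn.div (by fun_prop) (by fun_prop) ?_)
    exact fun s hs => ((lt_min hS hT).trans_le hs.1).ne'
  rw [← intervalIntegral.integral_of_le hST, intervalIntegral.integral_const_mul,
    intervalIntegral.integral_sub (hint _) (hint _), integral_sin_mul_div hS hT,
    integral_sin_mul_div hS hT]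

lemma sign_sub_eq_indicator_sub (x : ℝ) : (fun u : ℝ => ((SignType.sign (x - u) : ℝ))) =
    fun u => (Iio x).indicator (fun _ => 1) u - (Ioi x).indicator (fun _ => 1) u := by
  ext u
  rcases lt_trichotomy u x with h | rfl | h
  · simp [h, h.le]
  · simp
  · simp [h, h.le]

lemma integrable_sign_sub (μ : Measure ℝ) [IsFiniteMeasure μ] (x : ℝ) :
    Integrable (fun u : ℝ => ((SignType.sign (x - u) : ℝ))) μ := by
  rw [sign_sub_eq_indicator_sub]
  exact ((integrable_const (1 : ℝ)).indicator measurableSet_Iio).sub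
    ((integrable_const (1 : ℝ)).indicator measurableSet_Ioi)

lemma integral_sign_sub (μ : Measure ℝ) [IsFiniteMeasure μ] (x : ℝ) :
    ∫ u, ((SignType.sign (x - u) : ℝ)) ∂μ = μ.real (Iio x) - μ.real (Ioi x) := by
  rw [sign_sub_eq_indicator_sub,
    integral_sub ((integrable_const (1 : ℝ)).indicator measurableSet_Iio)
    ((integrable_const (1 : ℝ)).indicator measurableSet_Ioi),
    integral_indicator_const _ measurableSet_Iio, integral_indicator_const _ measurableSet_Ioi]
  simp

lemma tendsto_integral_exp_mul_centeredTransform (μ : Measure ℝ) [IsFiniteMeasure μ] (x : ℝ) :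
    Tendsto (fun P : ℝ × ℝ =>
        (∫ s in (-P.1)..(-P.2), Complex.exp (Complex.I * x * s) * centeredTransform μ s) +
          ∫ s in P.2..P.1, Complex.exp (Complex.I * x * s) * centeredTransform μ s)
      (atTop ×ˢ 𝓝[>] 0)
      (𝓝 ((Real.pi * (μ.real (Iio x) - μ.real (Ioi x) -
        SignType.sign x * μ.real univ) : ℝ) : ℂ)) := by
  have hlim : ∫ u, 2 * (Real.pi / 2 * (SignType.sign (x - u) : ℝ) -
      Real.pi / 2 * (SignType.sign x : ℝ)) ∂μ =
      Real.pi * (μ.real (Iio x) - μ.real (Ioi x) - SignType.sign x * μ.real univ) := by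
    rw [integral_const_mul, integral_sub ((integrable_sign_sub μ x).const_mul _) (integrable_const _),
      integral_const_mul, integral_sign_sub, integral_const, smul_eq_mul]
    ring
  rw [← hlim]
  refine Tendsto.congr' (f₁ := fun P : ℝ × ℝ =>
    ((∫ u, 2 * ((sineIntegral (P.1 * (x - u)) - sineIntegral (P.2 * (x - u))) -
        (sineIntegral (P.1 * x) - sineIntegral (P.2 * x))) ∂μ : ℝ) : ℂ)) ?_ ?_
  · have h2 : ∀ᶠ S : ℝ in 𝓝[>] 0, 0 < S ∧ S ≤ 1 := by
      filter_upwards [Ioc_mem_nhdsGT (zero_lt_one' ℝ)] with S hS using hS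
    filter_upwards [(eventually_ge_atTop (1 : ℝ)).prod_mk h2] with P hP
    exact (integral_exp_mul_centeredTransform μ x hP.2.1 (hP.2.2.trans hP.1)).symm
  · refine (Complex.continuous_ofReal.tendsto _).comp ?_
    have hC := abs_sineIntegral_le
    refine tendsto_integral_filter_of_dominated_convergence (fun _ => 8 * (Real.pi / 2 + 1))
      (Eventually.of_forall fun P => ?_) (Eventually.of_forall fun P => ae_of_all _ fun u => ?_)
      (integrable_const _) (ae_of_all _ fun u => ?_)
    · have := continuous_sineIntegral
      exact Continuous.aestronglyMeasurable (by fun_prop)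
    · rw [Real.norm_eq_abs, abs_le]
      have h1 := abs_le.1 (hC (P.1 * (x - u)))
      have h2 := abs_le.1 (hC (P.2 * (x - u)))
      have h3 := abs_le.1 (hC (P.1 * x))
      have h4 := abs_le.1 (hC (P.2 * x))
      constructor <;> linarith [h1.1, h1.2, h2.1, h2.2, h3.1, h3.2, h4.1, h4.2]
    · exact ((tendsto_sineIntegral_sub (x - u)).sub (tendsto_sineIntegral_sub x)).const_mul 2

lemma BoundedVariationOn.fun_sub {α E : Type*} [LinearOrder α] [SeminormedAddCommGroup E]
    {f g : α → E} {s : Set α} (hf : BoundedVariationOn f s) (hg : BoundedVariationOn g s) :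
    BoundedVariationOn (fun x => f x - g x) s := by
  refine ne_top_of_le_ne_top (ENNReal.add_ne_top.2 ⟨hf, hg⟩) (iSup_le ?_)
  rintro ⟨n, u, hu, us⟩
  calc ∑ i ∈ Finset.range n, edist (f (u (i + 1)) - g (u (i + 1))) (f (u i) - g (u i))
      ≤ ∑ i ∈ Finset.range n,
          (edist (f (u (i + 1))) (f (u i)) + edist (g (u (i + 1))) (g (u i))) := by
        gcongr with i
        rw [edist_eq_enorm_sub, edist_eq_enorm_sub, edist_eq_enorm_sub, sub_sub_sub_comm]
        exact enorm_sub_le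
    _ ≤ eVariationOn f s + eVariationOn g s := by
        rw [Finset.sum_add_distrib]
        gcongr
        · exact eVariationOn.sum_le hu us
        · exact eVariationOn.sum_le hu us

lemma heaviside_of_pos {x : ℝ} (hx : 0 < x) : heaviside x = 1 := if_pos hx

lemma heaviside_of_neg {x : ℝ} (hx : x < 0) : heaviside x = 0 := by
  simp [heaviside, hx.not_gt, hx.ne]

lemma heaviside_zero : heaviside 0 = 1 / 2 := by simp [heaviside]

lemma monotone_heaviside : Monotone heaviside := by
  intro x y hxy
  unfold heaviside
  split_ifs <;> grind

lemma abs_heaviside_le_one (x : ℝ) : |heaviside x| ≤ 1 := by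
  unfold heaviside
  split_ifs <;> norm_num [abs_le]

lemma heaviside_neg (x : ℝ) : heaviside (-x) = 1 - heaviside x := by
  rcases lt_trichotomy x 0 with h | rfl | h
  · rw [heaviside_of_pos (neg_pos.2 h), heaviside_of_neg h, sub_zero]
  · rw [neg_zero, heaviside_zero]
    norm_num
  · rw [heaviside_of_neg (neg_neg_iff_pos.2 h), heaviside_of_pos h, sub_self]

lemma two_mul_heaviside (x : ℝ) : 2 * heaviside x = 1 + SignType.sign x := by
  rcases lt_trichotomy x 0 with h | rfl | h
  · simp [heaviside_of_neg h, h]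
  · simp [heaviside_zero]
  · norm_num [heaviside_of_pos h, h]

lemma boundedVariationOn_heaviside : BoundedVariationOn heaviside univ :=
  (monotone_heaviside.monotoneOn univ).boundedVariationOn fun x _ => abs_heaviside_le_one x

lemma boundedVariationOn_const_mul_heaviside (c : ℝ) :
    BoundedVariationOn (fun x => c * heaviside x) univ := by
  have hc : BoundedVariationOn (fun _ : ℝ => c) univ :=
    (monotone_const.monotoneOn univ).boundedVariationOn fun _ _ => le_rfl
  exact hc.fun_mul boundedVariationOn_heaviside

lemma boundedVariationOn_const_mul_heaviside_neg (c : ℝ) :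
    BoundedVariationOn (fun x => c * heaviside (-x)) univ := by
  have hc : BoundedVariationOn (fun _ : ℝ => c) univ :=
    (monotone_const.monotoneOn univ).boundedVariationOn fun _ _ => le_rfl
  simpa only [heaviside_neg, mul_sub, mul_one] using
    hc.fun_sub (boundedVariationOn_const_mul_heaviside c)

/-- A function of bounded variation on `ℝ` is a difference of monotone functions with finite
limits at `±∞`. -/
lemma BoundedVariationOn.exists_monotone_sub_monotone_tendsto {f : ℝ → ℝ}
    (hf : BoundedVariationOn f univ) :
    ∃ p q : ℝ → ℝ, Monotone p ∧ Monotone q ∧ f = p - q ∧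
      (∃ a, Tendsto p atTop (𝓝 a)) ∧ (∃ b, Tendsto p atBot (𝓝 b)) ∧
      (∃ a, Tendsto q atTop (𝓝 a)) ∧ ∃ b, Tendsto q atBot (𝓝 b) := by
  obtain ⟨p, q, hp, hq, hpq, hvar⟩ :=
    hf.locallyBoundedVariationOn.exists_monotoneOn_sub_monotoneOn'
  rw [monotoneOn_univ] at hp hq
  have hle {x y : ℝ} (hxy : x ≤ y) : (p y - p x) + (q y - q x) ≤ (eVariationOn f univ).toReal := by
    rw [hvar x (mem_univ x) y (mem_univ y), variationOnFromTo.eq_of_le _ _ hxy]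
    exact ENNReal.toReal_mono hf (eVariationOn.mono f inter_subset_left)
  have hlim {r : ℝ → ℝ} (hr : Monotone r)
      (hb : ∀ {x y : ℝ}, x ≤ y → r y - r x ≤ (eVariationOn f univ).toReal) :
      (∃ a, Tendsto r atTop (𝓝 a)) ∧ ∃ b, Tendsto r atBot (𝓝 b) := by
    refine ⟨⟨_, tendsto_atTop_ciSup hr ⟨r 0 + (eVariationOn f univ).toReal, ?_⟩⟩,
      ⟨_, tendsto_atBot_ciInf hr ⟨r 0 - (eVariationOn f univ).toReal, ?_⟩⟩⟩
    · rintro _ ⟨t, rfl⟩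
      linarith [hb (le_max_left 0 t), hr (le_max_right 0 t)]
    · rintro _ ⟨t, rfl⟩
      linarith [hb (min_le_left 0 t), hr (min_le_right 0 t)]
  have hp' := hlim hp fun {x y} hxy => by linarith [hle hxy, hq hxy]
  have hq' := hlim hq fun {x y} hxy => by linarith [hle hxy, hp hxy]
  exact ⟨p, q, hp, hq, hpq, hp'.1, hp'.2, hq'.1, hq'.2⟩

/-- The Lebesgue–Stieltjes measure of a bounded monotone function. -/
lemma Monotone.exists_isFiniteMeasure {p : ℝ → ℝ} (hp : Monotone p) {a b : ℝ}
    (ha : Tendsto p atTop (𝓝 a)) (hb : Tendsto p atBot (𝓝 b)) :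
    ∃ μ : Measure ℝ, IsFiniteMeasure μ ∧ μ.real univ = a - b ∧
      (∀ x, μ.real (Iio x) = Function.leftLim p x - b) ∧
      ∀ x, μ.real (Ioi x) = a - Function.rightLim p x := by
  have hlow (t : ℝ) : p t ≤ hp.stieltjesFunction t := hp.le_rightLim le_rfl
  have hup (t : ℝ) : hp.stieltjesFunction t ≤ p (t + 1) := hp.rightLim_le (lt_add_one t)
  have ha' : Tendsto hp.stieltjesFunction atTop (𝓝 a) :=
    tendsto_of_tendsto_of_tendsto_of_le_of_le ha
      (ha.comp (tendsto_atTop_add_const_right _ 1 tendsto_id)) hlow hup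
  have hb' : Tendsto hp.stieltjesFunction atBot (𝓝 b) :=
    tendsto_of_tendsto_of_tendsto_of_le_of_le hb
      (hb.comp (tendsto_atBot_add_const_right _ 1 tendsto_id)) hlow hup
  refine ⟨hp.stieltjesFunction.measure, hp.stieltjesFunction.isFiniteMeasure hb' ha', ?_,
    fun x => ?_, fun x => ?_⟩
  · rw [measureReal_def, hp.stieltjesFunction.measure_univ hb' ha', ENNReal.toReal_ofReal]
    exact sub_nonneg.2 ((hp.le_of_tendsto hb 0).trans (hp.ge_of_tendsto ha 0))
  · have h : Function.leftLim hp.stieltjesFunction x = Function.leftLim p x :=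
      leftLim_rightLim (hp.tendsto_leftLim x)
    rw [measureReal_def, hp.stieltjesFunction.measure_Iio hb', h, ENNReal.toReal_ofReal]
    exact sub_nonneg.2 ((hp.le_of_tendsto hb (x - 1)).trans (hp.le_leftLim (sub_one_lt x)))
  · rw [measureReal_def, hp.stieltjesFunction.measure_Ioi ha', hp.stieltjesFunction_eq,
      ENNReal.toReal_ofReal]
    exact sub_nonneg.2 ((hup x).trans (hp.ge_of_tendsto ha _))

lemma Monotone.ae_leftLim_eq {p : ℝ → ℝ} (hp : Monotone p) :
    ∀ᵐ t, Function.leftLim p t = p t := by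
  filter_upwards [hp.countable_not_continuousAt.ae_notMem volume] with t ht
  rw [not_not] at ht
  exact ht.continuousWithinAt.leftLim_eq

/-- Inversion for a bounded variation function with nonzero limits at `±∞`:
with `g(x) = f(x) - f(∞)H(x) - f(-∞)H(-x)`, the function `g` is of bounded variation
with limit `0` at `±∞`, its improper-integral Fourier transform `ĝ(s)` exists for
`s ≠ 0`, and `(f(x-)+f(x+))/2 = (1/(2π)) lim_{T→∞,S→0⁺} ∫_{S<|s|<T} e^{ixs} ĝ(s) ds
+ f(∞)H(x) + f(-∞)H(-x)`. -/
theorem fourier_inversion_BV_with_limits (f : ℝ → ℝ)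
    (hbv : BoundedVariationOn f Set.univ)
    (finf fninf : ℝ)
    (htop : Filter.Tendsto f Filter.atTop (nhds finf))
    (hbot : Filter.Tendsto f Filter.atBot (nhds fninf)) :
    BoundedVariationOn
      (fun t : ℝ => f t - finf * heaviside t - fninf * heaviside (-t)) Set.univ ∧
    Filter.Tendsto
      (fun t : ℝ => f t - finf * heaviside t - fninf * heaviside (-t))
      Filter.atTop (nhds 0) ∧
    Filter.Tendsto
      (fun t : ℝ => f t - finf * heaviside t - fninf * heaviside (-t))
      Filter.atBot (nhds 0) ∧
    ∃ G : ℝ → ℂ,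
      (∀ s : ℝ, s ≠ 0 → Filter.Tendsto
        (fun P : ℝ × ℝ =>
          ∫ t in P.1..P.2, Complex.exp (-(Complex.I * s * t)) *
            ((f t - finf * heaviside t - fninf * heaviside (-t) : ℝ) : ℂ))
        (Filter.atBot ×ˢ Filter.atTop) (nhds (G s))) ∧
      ∀ x fl fr : ℝ,
        Filter.Tendsto f (nhdsWithin x (Set.Iio x)) (nhds fl) →
        Filter.Tendsto f (nhdsWithin x (Set.Ioi x)) (nhds fr) →
        Filter.Tendsto
          (fun P : ℝ × ℝ => (1 / (2 * (Real.pi : ℂ))) *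
            ((∫ s in (-P.1)..(-P.2), Complex.exp (Complex.I * x * s) * G s) +
              ∫ s in P.2..P.1, Complex.exp (Complex.I * x * s) * G s))
          (Filter.atTop ×ˢ nhdsWithin 0 (Set.Ioi 0))
          (nhds (((fl + fr) / 2 - finf * heaviside x - fninf * heaviside (-x) : ℝ) : ℂ)) := by
  have hbv' := (hbv.fun_sub (boundedVariationOn_const_mul_heaviside finf)).fun_sub
    (boundedVariationOn_const_mul_heaviside_neg fninf)
  have htop' : Tendsto (fun t : ℝ => f t - finf * heaviside t - fninf * heaviside (-t))
      atTop (𝓝 0) := by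
    rw [← sub_self finf]
    refine (htop.sub_const finf).congr' ?_
    filter_upwards [eventually_gt_atTop 0] with t ht
    simp [heaviside_neg, heaviside_of_pos ht]
  have hbot' : Tendsto (fun t : ℝ => f t - finf * heaviside t - fninf * heaviside (-t))
      atBot (𝓝 0) := by
    rw [← sub_self fninf]
    refine (hbot.sub_const fninf).congr' ?_
    filter_upwards [eventually_lt_atBot 0] with t ht
    simp [heaviside_neg, heaviside_of_neg ht]
  refine ⟨hbv', htop', hbot', ?_⟩
  obtain ⟨p, q, hp, hq, rfl, ⟨pa, hpa⟩, ⟨pb, hpb⟩, ⟨qa, hqa⟩, ⟨qb, hqb⟩⟩ :=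
    hbv.exists_monotone_sub_monotone_tendsto
  obtain rfl : finf = pa - qa := tendsto_nhds_unique htop (hpa.sub hqa)
  obtain rfl : fninf = pb - qb := tendsto_nhds_unique hbot (hpb.sub hqb)
  obtain ⟨μ, _, hμ, hμl, hμr⟩ := hp.exists_isFiniteMeasure hpa hpb
  obtain ⟨ν, _, hν, hνl, hνr⟩ := hq.exists_isFiniteMeasure hqa hqb
  have hae : ∀ᵐ t : ℝ, (p - q) t - (pa - qa) * heaviside t - (pb - qb) * heaviside (-t) =
      centeredCDF μ t - centeredCDF ν t := by
    filter_upwards [hp.ae_leftLim_eq, hq.ae_leftLim_eq,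
      (countable_singleton (0 : ℝ)).ae_notMem volume] with t hpt hqt ht
    rw [centeredCDF, centeredCDF, hμl, hνl, hpt, hqt, hμ, hν, heaviside_neg, Pi.sub_apply]
    rcases lt_or_gt_of_ne ht with h | h
    · rw [heaviside_of_neg h, indicator_of_notMem (by simpa using h.le),
        indicator_of_notMem (by simpa using h.le)]
      ring
    · rw [heaviside_of_pos h, indicator_of_mem (mem_Ioi.2 h), indicator_of_mem (mem_Ioi.2 h)]
      ring
  refine ⟨fun s => centeredTransform μ s - centeredTransform ν s, fun s hs => ?_,
    fun x fl fr hl hr => ?_⟩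
  · refine ((tendsto_integral_exp_mul_centeredCDF μ hs).sub
      (tendsto_integral_exp_mul_centeredCDF ν hs)).congr fun P => ?_
    rw [← intervalIntegral.integral_sub (intervalIntegrable_exp_mul_centeredCDF μ s _ _)
      (intervalIntegrable_exp_mul_centeredCDF ν s _ _)]
    refine intervalIntegral.integral_congr_ae ?_
    filter_upwards [hae] with t ht _
    rw [ht]
    push_cast
    ring
  · obtain rfl : fl = Function.leftLim p x - Function.leftLim q x :=
      tendsto_nhds_unique hl ((hp.tendsto_leftLim x).sub (hq.tendsto_leftLim x))
    obtain rfl : fr = Function.rightLim p x - Function.rightLim q x :=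
      tendsto_nhds_unique hr ((hp.tendsto_rightLim x).sub (hq.tendsto_rightLim x))
    have hlim := ((tendsto_integral_exp_mul_centeredTransform μ x).sub
      (tendsto_integral_exp_mul_centeredTransform ν x)).const_mul (1 / (2 * (Real.pi : ℂ)))
    have hpi : (Real.pi : ℂ) ≠ 0 := by exact_mod_cast Real.pi_ne_zero
    have hsign : (SignType.sign x : ℝ) = 2 * heaviside x - 1 := by
      rw [two_mul_heaviside, add_sub_cancel_left]
    convert hlim.congr' ?_ using 2
    · rw [hμl, hμr, hμ, hνl, hνr, hν, hsign, heaviside_neg]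
      push_cast
      field_simp
      ring
    · filter_upwards [(eventually_gt_atTop (0 : ℝ)).prod_mk self_mem_nhdsWithin] with P hP
      obtain ⟨h1, h2⟩ : 0 < P.1 ∧ 0 < P.2 := hP
      have hneg : 0 < -P.1 * -P.2 := by rw [neg_mul_neg]; positivity
      simp only [mul_sub (Complex.exp _)]
      rw [intervalIntegral.integral_sub (intervalIntegrable_exp_mul_centeredTransform μ x hneg)
          (intervalIntegrable_exp_mul_centeredTransform ν x hneg),
        intervalIntegral.integral_sub
          (intervalIntegrable_exp_mul_centeredTransform μ x (by positivity))
          (intervalIntegrable_exp_mul_centeredTransform ν x (by positivity))]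
      ring
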